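/- Let G be a finite group acting freely on a connected finite poset 𝒫 (g(x) ≠ x for all x ∈ 𝒫 and all nonidentity g ∈ G). If there exist distinct elements x, y, z ∈ 𝒫 with y and z in the same G-orbit such that either x < y and x < z, or x > y and x > z, then the transporter category 𝒯 = G ∝ 𝒫 is of infinite representation type. -/

import Mathlib

set_option maxHeartbeats 1000000

noncomputable section
open Finset
open scoped Classical


section CoreSGA

variable {k : Type} [CommRing k] {Λ : Type} [Ring Λ] [Algebra k Λ]
variable {G : Type} [Group G] [Fintype G]

/-- The skew group algebra `Λ ⊗_k kG` (as functions `G → Λ`), with multiplication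
`(λ ⊗ g) ⬝ (μ ⊗ h) = λ · g(μ) ⊗ gh`. -/
structure SGA (σ : G →* (Λ ≃ₐ[k] Λ)) : Type where
  toFun : G → Λ

namespace SGA

variable {σ : G →* (Λ ≃ₐ[k] Λ)}

@[simp] lemma mk_toFun (f : G → Λ) : (SGA.mk f : SGA σ).toFun = f := rfl

@[ext] lemma ext {f h : SGA σ} (w : ∀ g, f.toFun g = h.toFun g) : f = h := by
  cases f; cases h; simp only [mk.injEq]; funext g; exact w g

/-- The underlying-function equivalence. -/
def equivFun : SGA σ ≃ (G → Λ) := ⟨toFun, mk, fun _ => rfl, fun _ => rfl⟩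

instance : AddCommGroup (SGA σ) := (equivFun (σ := σ)).addCommGroup

@[simp] lemma toFun_add (f h : SGA σ) (g : G) : (f + h).toFun g = f.toFun g + h.toFun g := rfl
@[simp] lemma toFun_zero (g : G) : (0 : SGA σ).toFun g = 0 := rfl
@[simp] lemma toFun_neg (f : SGA σ) (g : G) : (-f).toFun g = -(f.toFun g) := rfl

instance : Mul (SGA σ) :=
  ⟨fun f h => ⟨fun x => ∑ g : G, f.toFun g * σ g (h.toFun (g⁻¹ * x))⟩⟩

instance : One (SGA σ) := ⟨⟨fun x => if x = 1 then 1 else 0⟩⟩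

@[simp] lemma toFun_mul (f h : SGA σ) (x : G) :
    (f * h).toFun x = ∑ g : G, f.toFun g * σ g (h.toFun (g⁻¹ * x)) := rfl

lemma toFun_one (x : G) : (1 : SGA σ).toFun x = if x = 1 then 1 else 0 := rfl

protected lemma one_mul (f : SGA σ) : 1 * f = f := by
  ext x
  rw [toFun_mul]
  rw [Finset.sum_eq_single (1 : G)]
  · simp [toFun_one]
  · intro b _ hb
    simp [toFun_one, hb]
  · simp

protected lemma mul_one (f : SGA σ) : f * 1 = f := by
  ext x
  rw [toFun_mul]
  rw [Finset.sum_eq_single (x : G)]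
  · simp [toFun_one]
  · intro b _ hb
    have : b⁻¹ * x ≠ 1 := by
      intro hc
      rw [inv_mul_eq_one] at hc
      exact hb hc
    simp [toFun_one, this]
  · simp

protected lemma mul_assoc (f h e : SGA σ) : f * h * e = f * (h * e) := by
  ext x
  rw [toFun_mul, toFun_mul]
  simp only [toFun_mul, Finset.sum_mul, map_sum, Finset.mul_sum, map_mul]
  rw [Finset.sum_comm]
  refine Finset.sum_congr rfl fun u _ => ?_
  rw [← Fintype.sum_equiv (Equiv.mulLeft u)
    (fun v => f.toFun u * σ u (h.toFun v) * σ (u * v) (e.toFun ((u * v)⁻¹ * x)))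
    (fun g => f.toFun u * σ u (h.toFun (u⁻¹ * g)) * σ g (e.toFun (g⁻¹ * x)))
    (fun v => by simp [Equiv.mulLeft])]
  refine Finset.sum_congr rfl fun v _ => ?_
  have h3 : (u * v)⁻¹ * x = v⁻¹ * (u⁻¹ * x) := by group
  have h4 : σ u (σ v (e.toFun (v⁻¹ * (u⁻¹ * x)))) = σ (u * v) (e.toFun (v⁻¹ * (u⁻¹ * x))) := by
    rw [map_mul σ]; rfl
  rw [h3, ← h4, mul_assoc]

protected lemma left_distrib (f h e : SGA σ) : f * (h + e) = f * h + f * e := by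
  ext x
  simp [mul_add, Finset.sum_add_distrib]

protected lemma right_distrib (f h e : SGA σ) : (f + h) * e = f * e + h * e := by
  ext x
  simp [add_mul, Finset.sum_add_distrib]

protected lemma zero_mul (f : SGA σ) : 0 * f = 0 := by
  ext x; simp

protected lemma mul_zero (f : SGA σ) : f * 0 = 0 := by
  ext x; simp

instance instRing : Ring (SGA σ) :=
  { (inferInstance : AddCommGroup (SGA σ)),
    (inferInstance : Mul (SGA σ)), (inferInstance : One (SGA σ)) with
    mul_assoc := SGA.mul_assoc
    one_mul := SGA.one_mul
    mul_one := SGA.mul_one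
    left_distrib := SGA.left_distrib
    right_distrib := SGA.right_distrib
    zero_mul := SGA.zero_mul
    mul_zero := SGA.mul_zero }

/-- The canonical inclusion `Λ → ΛG`, `λ ↦ λ ⊗ 1`. -/
def emb (σ : G →* (Λ ≃ₐ[k] Λ)) : Λ →+* SGA σ where
  toFun a := ⟨fun x => if x = 1 then a else 0⟩
  map_one' := rfl
  map_zero' := by ext x; simp
  map_add' a b := by ext x; by_cases hx : x = 1 <;> simp [hx]
  map_mul' a b := by
    ext x
    rw [toFun_mul]
    rw [Finset.sum_eq_single (1 : G)]
    · by_cases hx : x = 1 <;> simp [hx]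
    · intro b' _ hb'; simp [hb']
    · simp

end SGA

end CoreSGA

section GeneralDefs

/-- An idempotent `e` is primitive if it is nonzero and cannot be written as a sum of two
nonzero orthogonal idempotents. -/
def IsPrimitiveIdempotent (A : Type) [Ring A] (e : A) : Prop :=
  IsIdempotentElem e ∧ e ≠ 0 ∧
    ∀ f g : A, IsIdempotentElem f → IsIdempotentElem g → f * g = 0 → g * f = 0 →
      e = f + g → f = 0 ∨ g = 0

/-- A finite family `e : Fin n → A` is a complete set of primitive orthogonal idempotents. -/
def IsCompletePrimitiveOrthogonalSystem (A : Type) [Ring A] {n : ℕ} (e : Fin n → A) : Prop :=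
  (∀ i, IsPrimitiveIdempotent A (e i)) ∧
    (∀ i j, i ≠ j → e i * e j = 0) ∧ (∑ i, e i = 1)

/-- A ring is connected (indecomposable as an algebra) if its only central idempotents
are `0` and `1`. -/
def IsConnectedRing (A : Type) [Ring A] : Prop :=
  Nontrivial A ∧ ∀ e : A, IsIdempotentElem e → (∀ x : A, e * x = x * e) → e = 0 ∨ e = 1

/-- A ring is basic if it admits a complete set of primitive orthogonal idempotents `e i`
such that the indecomposable projective left modules `A e i` are pairwise nonisomorphic. -/
def IsBasicRing (A : Type) [Ring A] : Prop :=
  ∃ (n : ℕ) (e : Fin n → A), IsCompletePrimitiveOrthogonalSystem A e ∧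
    ∀ i j, i ≠ j →
      IsEmpty ((Submodule.span A {e i} : Submodule A A) ≃ₗ[A] (Submodule.span A {e j} : Submodule A A))

/-- `projDimLE A n M` : the `A`-module `M` admits a projective resolution of length at
most `n`, i.e. has projective dimension `≤ n`. -/
def projDimLE (A : Type) [Ring A] (n : ℕ) (M : Type) [AddCommGroup M] [Module A M] : Prop :=
  ∃ (P : ℕ → ModuleCat.{0} A) (d : (i : ℕ) → (P (i + 1) →ₗ[A] P i)) (ε : P 0 →ₗ[A] M),
    (∀ i, Module.Projective A (P i)) ∧
    Function.Surjective ε ∧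
    LinearMap.range (d 0) = LinearMap.ker ε ∧
    (∀ i, LinearMap.range (d (i + 1)) = LinearMap.ker (d i)) ∧
    (∀ i, n < i → ∀ x : P i, x = 0)

/-- The (little) global dimension of a ring, as an element of `ℕ∞`: the least `n` such that
every finitely generated `A`-module has projective dimension at most `n` (and `⊤` if there
is no such `n`). -/
noncomputable def globalDim (A : Type) [Ring A] : ℕ∞ :=
  sInf {c : ℕ∞ | ∃ n : ℕ, c = (n : ℕ∞) ∧
    ∀ (M : Type) [AddCommGroup M] [Module A M], Module.Finite A M → projDimLE A n M}

/-- A module is indecomposable if it is nonzero and is not the internal direct sum of two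
nonzero submodules. -/
def IsIndecomposableModule (A : Type) [Ring A] (M : Type) [AddCommGroup M] [Module A M] : Prop :=
  Nontrivial M ∧ ∀ N₁ N₂ : Submodule A M, IsCompl N₁ N₂ → N₁ = ⊥ ∨ N₂ = ⊥

/-- A ring has finite representation type if there are only finitely many isomorphism classes
of finitely generated indecomposable left modules. -/
def FiniteRepType (A : Type) [Ring A] : Prop :=
  ∃ S : Set (Σ m : ℕ, Submodule A (Fin m → A)), S.Finite ∧
    ∀ (M : Type) [AddCommGroup M] [Module A M], Module.Finite A M →
      IsIndecomposableModule A M →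
        ∃ p ∈ S, Nonempty (M ≃ₗ[A] ((Fin p.1 → A) ⧸ p.2))

/-- Two rings are Morita equivalent if their categories of modules are equivalent. -/
def MoritaEquivalent (A B : Type) [Ring A] [Ring B] : Prop :=
  Nonempty (ModuleCat.{0} A ≌ ModuleCat.{0} B)

/-- An Auslander algebra: global dimension at most `2`, and there is an exact sequence
`0 → A → I₀ → I₁` with `I₀`, `I₁` both projective and injective (equivalently, in a minimal
injective resolution `0 → A → I₀ → I₁ → I₂ → 0` the terms `I₀` and `I₁` are projective). -/
def IsAuslanderAlgebra (A : Type) [Ring A] : Prop :=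
  globalDim A ≤ 2 ∧
    ∃ (I₀ I₁ : ModuleCat.{0} A) (f : A →ₗ[A] I₀) (g : I₀ →ₗ[A] I₁),
      Module.Injective A I₀ ∧ Module.Projective A I₀ ∧
      Module.Injective A I₁ ∧ Module.Projective A I₁ ∧
      Function.Injective f ∧ LinearMap.ker g = LinearMap.range f

/-- The `i`-th power of a left ideal (with `I ^ 0 = ⊤`). -/
def leftIdealPow (A : Type) [Ring A] (I : Submodule A A) : ℕ → Submodule A A
  | 0 => ⊤
  | n + 1 => Submodule.span A {x : A | ∃ a ∈ I, ∃ b ∈ leftIdealPow A I n, x = a * b}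

end GeneralDefs
section IncidenceAlgebra

variable (k : Type) [CommRing k] (P : Type) [Fintype P] [PartialOrder P] [DecidableEq P]

/-- The incidence algebra of a finite poset `P` over `k`, realized as the subalgebra of
`P × P`-matrices supported on pairs `x ≤ y`. -/
def IncidenceAlg : Subalgebra k (Matrix P P k) where
  carrier := {M : Matrix P P k | ∀ x y : P, ¬ x ≤ y → M x y = 0}
  mul_mem' := fun {M N} hM hN => by
    intro x y hxy
    rw [Matrix.mul_apply]
    refine Finset.sum_eq_zero fun z _ => ?_
    by_cases hxz : x ≤ z
    · have hzy : ¬ z ≤ y := fun h => hxy (le_trans hxz h)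
      rw [hN z y hzy, mul_zero]
    · rw [hM x z hxz, zero_mul]
  one_mem' := fun x y hxy =>
    Matrix.one_apply_ne (fun h => hxy (le_of_eq h))
  add_mem' := fun {M N} hM hN x y hxy => by
    show M x y + N x y = 0
    rw [hM x y hxy, hN x y hxy, add_zero]
  zero_mem' := fun x y _ => rfl
  algebraMap_mem' := fun c x y hxy => by
    rw [Matrix.algebraMap_matrix_apply, if_neg (fun h => hxy (le_of_eq h))]

variable {k P}

/-- The algebra automorphism of the incidence algebra induced by an order automorphism
of the poset. -/
def incAut (e : P ≃o P) : (IncidenceAlg k P) ≃ₐ[k] (IncidenceAlg k P) where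
  toFun M := ⟨fun x y => (M : Matrix P P k) (e.symm x) (e.symm y),
    fun x y hxy => M.2 _ _ (fun h => hxy (e.symm.le_iff_le.mp h))⟩
  invFun M := ⟨fun x y => (M : Matrix P P k) (e x) (e y),
    fun x y hxy => M.2 _ _ (fun h => hxy (e.le_iff_le.mp h))⟩
  left_inv M := Subtype.ext (by funext x y; simp)
  right_inv M := Subtype.ext (by funext x y; simp)
  map_add' M N := Subtype.ext (by funext x y; rfl)
  map_mul' M N := Subtype.ext (by
    funext x y
    simp only [MulMemClass.coe_mul]
    rw [Matrix.mul_apply]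
    exact (Equiv.sum_comp (e.symm.toEquiv)
      (fun z => (M : Matrix P P k) (e.symm x) z * (N : Matrix P P k) z (e.symm y))).symm)
  commutes' c := Subtype.ext (by
    funext x y
    show algebraMap k (Matrix P P k) c (e.symm x) (e.symm y)
      = algebraMap k (Matrix P P k) c x y
    rw [Matrix.algebraMap_matrix_apply, Matrix.algebraMap_matrix_apply]
    by_cases h : x = y
    · subst h; simp
    · rw [if_neg (fun hc => h (e.symm.injective hc)), if_neg h])

/-- The action of a group of order automorphisms of `P` on the incidence algebra. -/
def incRep {G : Type} [Group G] (ρ : G →* (P ≃o P)) :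
    G →* ((IncidenceAlg k P) ≃ₐ[k] (IncidenceAlg k P)) :=
  MonoidHom.mk' (fun g => incAut (ρ g)) (by
    intro g h
    apply AlgEquiv.ext
    intro M
    apply Subtype.ext
    funext x y
    show (M : Matrix P P k) ((ρ (g * h)).symm x) ((ρ (g * h)).symm y) = _
    rw [map_mul ρ]
    rfl)

/-- A poset is connected if any two elements are linked by a chain of comparabilities. -/
def PosetConnected (P : Type) [PartialOrder P] : Prop :=
  ∀ x y : P, Relation.ReflTransGen (fun a b : P => a ≤ b ∨ b ≤ a) x y

end IncidenceAlgebra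

/-!
A fork `x < z`, `x < g z` gives two parallel morphisms `u`, `v` between the objects `x` and `z` of
the transporter category, and similarly for a fork below `x`. Any group element `a` with `z ≤ a x`
would satisfy `z ≤ a z` and `z ≤ a g z`, hence `a = 1 = a g` since the stabilizer of `z` is trivial,
so there is no morphism the other way. Trivial stabilizers also make the endomorphisms of `x` and
`z` scalars, and the pair behaves like the Kronecker quiver: the cyclic modules `A e / A (u - t v)`,
where `e` is the identity of `z`, are indecomposable and pairwise nonisomorphic as `t` runs
through `k`.
-/

section Indecomposables

theorem not_finiteRepType_of_pairwise_nonisomorphic {A : Type} [Ring A] {ι : Type*} [Infinite ι]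
    (M : ι → Type) [∀ i, AddCommGroup (M i)] [∀ i, Module A (M i)] [∀ i, Module.Finite A (M i)]
    (hind : ∀ i, IsIndecomposableModule A (M i))
    (hiso : ∀ i j, Nonempty (M i ≃ₗ[A] M j) → i = j) :
    ¬ FiniteRepType A := by
  rintro ⟨S, hS, hrep⟩
  choose q hqS hq using fun i => hrep (M i) inferInstance (hind i)
  have : Finite S := hS
  obtain ⟨i, j, hij, hqij⟩ := Finite.exists_ne_map_eq_of_infinite fun i => (⟨q i, hqS i⟩ : S)
  obtain ⟨φ⟩ := hq i
  obtain ⟨ψ⟩ := hq j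
  rw [← show q i = q j from congrArg Subtype.val hqij] at ψ
  exact hij (hiso i j ⟨φ.trans ψ.symm⟩)

lemma isIndecomposableModule_of_end {A M : Type} [Ring A] [AddCommGroup M] [Module A M]
    [Nontrivial M] (h : ∀ π : Module.End A M, IsIdempotentElem π → π = 0 ∨ π = 1) :
    IsIndecomposableModule A M := by
  refine ⟨inferInstance, fun N₁ N₂ hN => ?_⟩
  rcases h (N₁.projection N₂ hN) (Submodule.isIdempotentElem_projection hN) with hπ | hπ
  · exact .inl (by rw [← Submodule.range_projection hN, hπ, LinearMap.range_zero])
  · exact .inr (by rw [← Submodule.ker_projection hN, hπ, Module.End.one_eq_id, LinearMap.ker_id])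

lemma isConnectedRing_of_isDomain (k : Type) [CommRing k] [IsDomain k] : IsConnectedRing k :=
  ⟨inferInstance, fun _ he _ => IsIdempotentElem.iff_eq_zero_or_one.1 he⟩

end Indecomposables

section ScalarCorner

variable {k A : Type} [CommRing k] [Ring A] [Algebra k A]

/-- The corner `e A e` consists of scalar multiples of `e`. For the identity `e` of an object of a
category with category algebra `A`, this says that all its endomorphisms are scalars. -/
def HasScalarCorner (k : Type) {A : Type} [CommRing k] [Ring A] [Algebra k A] (e : A) : Prop :=
  ∀ r : A, ∃ c : k, e * r * e = c • e

variable {M : Type} [AddCommGroup M] [Module A M] [Module k M] [IsScalarTower k A M]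
  {e : A} {m : M}

lemma HasScalarCorner.exists_eq_smul (he : HasScalarCorner k e)
    (hm : Submodule.span A {m} = ⊤) (hem : e • m = m) {n : M} (hn : e • n = n) :
    ∃ c : k, n = c • m := by
  obtain ⟨r, rfl⟩ := Submodule.mem_span_singleton.1 (hm ▸ Submodule.mem_top (x := n))
  obtain ⟨c, hc⟩ := he r
  refine ⟨c, ?_⟩
  calc r • m = (e * r * e) • m := by rw [mul_smul, mul_smul, hem, hn]
    _ = c • m := by rw [hc, smul_assoc, hem]

lemma HasScalarCorner.isIndecomposableModule (he : HasScalarCorner k e) (hk : IsConnectedRing k)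
    (hm : Submodule.span A {m} = ⊤) (hem : e • m = m) (hm_free : ∀ c : k, c • m = 0 → c = 0) :
    IsIndecomposableModule A M := by
  have := hk.1
  have hm_ne : m ≠ 0 := fun h => one_ne_zero (hm_free 1 (by rw [h, smul_zero]))
  have : Nontrivial M := ⟨m, 0, hm_ne⟩
  refine isIndecomposableModule_of_end fun π hπ => ?_
  obtain ⟨c, hc⟩ := he.exists_eq_smul hm hem (n := π m) (by rw [← map_smul, hem])
  have hcc : c * c = c := by
    refine sub_eq_zero.1 (hm_free _ ?_)
    rw [sub_smul, mul_smul, ← hc, ← LinearMap.map_smul_of_tower, ← hc, ← Module.End.mul_apply,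
      hπ.eq, sub_self]
  have hext {ψ : Module.End A M} (h : π m = ψ m) : π = ψ :=
    LinearMap.ext_on hm fun _ hx => Set.mem_singleton_iff.1 hx ▸ h
  rcases hk.2 c hcc fun x => mul_comm c x with rfl | rfl
  · exact .inl (hext (by rw [hc, zero_smul, LinearMap.zero_apply]))
  · exact .inr (hext (by rw [hc, one_smul, Module.End.one_apply]))

end ScalarCorner

section KroneckerPair

variable {k A : Type} [CommRing k] [Ring A] [Algebra k A]

/-- The module `A e / A w` for an idempotent `e` and `w = w e`, encoded as the quotient of `A` by
the left ideal generated by `1 - e` and `w`. -/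
abbrev CyclicQuotient {A : Type} [Ring A] (e w : A) : Type :=
  A ⧸ (Submodule.span A {1 - e, w} : Submodule A A)

namespace CyclicQuotient

/-- The class of `e` (equivalently, of `1`), which generates `A e / A w`. -/
def gen {A : Type} [Ring A] (e w : A) : CyclicQuotient e w :=
  Submodule.Quotient.mk 1

variable {e f w w' : A}

lemma mk_eq_smul_gen (r : A) : (Submodule.Quotient.mk r : CyclicQuotient e w) = r • gen e w := by
  rw [gen, ← Submodule.Quotient.mk_smul, smul_eq_mul, mul_one]

lemma span_gen : Submodule.span A {gen e w} = ⊤ :=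
  (Submodule.span_singleton_eq_top_iff A _).2 fun n => by
    obtain ⟨r, rfl⟩ := Submodule.Quotient.mk_surjective _ n
    exact ⟨r, (mk_eq_smul_gen r).symm⟩

lemma smul_gen_eq_zero_iff {r : A} : r • gen e w = 0 ↔ ∃ a b, a * (1 - e) + b * w = r := by
  rw [← mk_eq_smul_gen, Submodule.Quotient.mk_eq_zero, Submodule.mem_span_pair]
  rfl

lemma idempotent_smul_gen : e • gen e w = gen e w := by
  have h : (1 - e) • gen e w = 0 := smul_gen_eq_zero_iff.2 ⟨1, 0, by simp⟩
  rw [sub_smul, one_smul, sub_eq_zero] at h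
  exact h.symm

lemma relation_smul_gen : w • gen e w = 0 :=
  smul_gen_eq_zero_iff.2 ⟨0, 1, by simp⟩

lemma exists_mul_mul_eq_of_smul_gen_eq_zero (he : IsIdempotentElem e) (hfw : f * w = w)
    (hwe : w * e = w) {r : A} (hr : r • gen e w = 0) (g : A) :
    ∃ b, g * r * e = g * b * f * w := by
  obtain ⟨a, b, rfl⟩ := smul_gen_eq_zero_iff.1 hr
  refine ⟨b, ?_⟩
  calc g * (a * (1 - e) + b * w) * e = g * a * ((1 - e) * e) + g * b * (w * e) := by noncomm_ring
    _ = g * b * f * w := by rw [he.one_sub_mul_self, hwe, mul_zero, zero_add, mul_assoc _ f, hfw]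

lemma smul_idempotent_eq_zero (he : IsIdempotentElem e) (hef : ∀ r, e * r * f = 0)
    (hfw : f * w = w) (hwe : w * e = w) {c : k} (hc : c • gen e w = 0) : c • e = 0 := by
  have hc' : (c • 1 : A) • gen e w = 0 := by rw [smul_assoc, one_smul, hc]
  obtain ⟨b, hb⟩ := exists_mul_mul_eq_of_smul_gen_eq_zero he hfw hwe hc' e
  calc c • e = e * (c • 1) * e := by rw [mul_smul_comm, mul_one, smul_mul_assoc, he.eq]
    _ = 0 := by rw [hb, hef, zero_mul]

lemma exists_eq_smul_of_smul_gen_eq_zero (he : IsIdempotentElem e) (hf : HasScalarCorner k f)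
    (hfw : f * w = w) (hwe : w * e = w) (hfw' : f * w' = w') (hwe' : w' * e = w')
    (h : w' • gen e w = 0) : ∃ c : k, w' = c • w := by
  obtain ⟨b, hb⟩ := exists_mul_mul_eq_of_smul_gen_eq_zero he hfw hwe h f
  obtain ⟨c, hc⟩ := hf b
  exact ⟨c, by rw [← hwe', ← hfw', hb, hc, smul_mul_assoc, hfw]⟩

lemma exists_eq_smul_of_equiv (he : IsIdempotentElem e) (hek : HasScalarCorner k e)
    (hf : HasScalarCorner k f) (hfw : f * w = w) (hwe : w * e = w) (hfw' : f * w' = w')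
    (hwe' : w' * e = w') (φ : CyclicQuotient e w' ≃ₗ[A] CyclicQuotient e w) :
    ∃ c : k, w' = c • w := by
  obtain ⟨d, hd⟩ := hek.exists_eq_smul span_gen idempotent_smul_gen (n := φ.symm (gen e w))
    (by rw [← map_smul, idempotent_smul_gen])
  refine exists_eq_smul_of_smul_gen_eq_zero he hf hfw hwe hfw' hwe' ?_
  refine φ.symm.map_eq_zero_iff.1 ?_
  rw [map_smul, hd, smul_comm, relation_smul_gen, smul_zero]

end CyclicQuotient

/-- Elements `u`, `v` of `f A e` that, together with `e` and `f`, multiply like the paths of the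
Kronecker quiver; `f A e` may be larger than their span. Left multiplication by `u` and `v` takes
`e M` to `f M` for a left module `M`, whence the names source and target. -/
structure IsKroneckerPair (k : Type) {A : Type} [CommRing k] [Ring A] [Algebra k A]
    (e f u v : A) : Prop where
  idempotent : IsIdempotentElem e
  source_corner : HasScalarCorner k e
  target_corner : HasScalarCorner k f
  source_mul_target (r : A) : e * r * f = 0
  target_mul_fst : f * u = u
  target_mul_snd : f * v = v
  fst_mul_source : u * e = u
  snd_mul_source : v * e = v
  linearIndependent : LinearIndependent k ![u, v]

namespace IsKroneckerPair

variable {e f u v : A} (h : IsKroneckerPair k e f u v)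
include h

lemma target_mul_pencil (t : k) : f * (u - t • v) = u - t • v := by
  rw [mul_sub, mul_smul_comm, h.target_mul_fst, h.target_mul_snd]

lemma pencil_mul_source (t : k) : (u - t • v) * e = u - t • v := by
  rw [sub_mul, smul_mul_assoc, h.fst_mul_source, h.snd_mul_source]

lemma eq_zero_of_smul_source (c : k) (hc : c • e = 0) : c = 0 := by
  refine (LinearIndependent.pair_iff.1 h.linearIndependent c 0 ?_).1
  rw [zero_smul, add_zero, ← h.fst_mul_source, ← mul_smul_comm, hc, mul_zero]

lemma eq_of_pencil_eq_smul {s t c : k} (hst : u - s • v = c • (u - t • v)) : s = t := by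
  have hzero : (1 - c) • u + (c * t - s) • v = 0 := by
    rw [← sub_eq_zero.2 hst]
    module
  obtain ⟨hc, hs⟩ := LinearIndependent.pair_iff.1 h.linearIndependent _ _ hzero
  rw [← sub_eq_zero.1 hs, ← sub_eq_zero.1 hc, one_mul]

theorem not_finiteRepType [Infinite k] (hk : IsConnectedRing k) : ¬ FiniteRepType A := by
  refine not_finiteRepType_of_pairwise_nonisomorphic
    (fun t : k => CyclicQuotient e (u - t • v)) (fun t => ?_) fun s t ⟨φ⟩ => ?_
  · exact h.source_corner.isIndecomposableModule hk CyclicQuotient.span_gen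
      CyclicQuotient.idempotent_smul_gen fun c hc => h.eq_zero_of_smul_source c <|
        CyclicQuotient.smul_idempotent_eq_zero h.idempotent h.source_mul_target
          (h.target_mul_pencil t) (h.pencil_mul_source t) hc
  · obtain ⟨c, hc⟩ := CyclicQuotient.exists_eq_smul_of_equiv h.idempotent h.source_corner
      h.target_corner (h.target_mul_pencil t) (h.pencil_mul_source t) (h.target_mul_pencil s)
      (h.pencil_mul_source s) φ
    exact h.eq_of_pencil_eq_smul hc

end IsKroneckerPair

end KroneckerPair

section SkewGroupAlgebra

variable {k : Type} [CommRing k] {Λ : Type} [Ring Λ] [Algebra k Λ]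
variable {G : Type} [Group G] [Fintype G] {σ : G →* (Λ ≃ₐ[k] Λ)}

namespace SGA

/-- The element `a ⊗ g` of the skew group algebra. -/
def single (σ : G →* (Λ ≃ₐ[k] Λ)) (g : G) (a : Λ) : SGA σ :=
  ⟨fun x => if x = g then a else 0⟩

omit [Fintype G] in
lemma single_toFun (g x : G) (a : Λ) : (single σ g a).toFun x = if x = g then a else 0 := rfl

lemma emb_eq_single (a : Λ) : emb σ a = single σ 1 a := rfl

lemma single_mul_toFun (g x : G) (a : Λ) (r : SGA σ) :
    (single σ g a * r).toFun x = a * σ g (r.toFun (g⁻¹ * x)) := by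
  rw [toFun_mul, Finset.sum_eq_single g]
  · rw [single_toFun, if_pos rfl]
  · intro h _ hh
    rw [single_toFun, if_neg hh, zero_mul]
  · simp

lemma mul_single_toFun (g x : G) (a : Λ) (r : SGA σ) :
    (r * single σ g a).toFun x = r.toFun (x * g⁻¹) * σ (x * g⁻¹) a := by
  rw [toFun_mul, Finset.sum_eq_single (x * g⁻¹)]
  · simp [single_toFun]
  · intro h _ hh
    have : h⁻¹ * x ≠ g := fun hg => hh (by rw [← hg]; group)
    rw [single_toFun, if_neg this, map_zero, mul_zero]
  · simp

lemma single_mul_single (g h : G) (a b : Λ) :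
    single σ g a * single σ h b = single σ (g * h) (a * σ g b) := by
  ext x
  rw [single_mul_toFun, single_toFun, single_toFun]
  by_cases hx : x = g * h
  · rw [if_pos hx, if_pos (inv_mul_eq_iff_eq_mul.2 hx)]
  · rw [if_neg hx, if_neg fun h' => hx (inv_mul_eq_iff_eq_mul.1 h'), map_zero, mul_zero]

lemma emb_algebraMap_mul_toFun (c : k) (r : SGA σ) (g : G) :
    (emb σ (algebraMap k Λ c) * r).toFun g = c • r.toFun g := by
  rw [emb_eq_single, single_mul_toFun, map_one, inv_one, one_mul, AlgEquiv.one_apply,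
    Algebra.smul_def]

instance : Algebra k (SGA σ) :=
  ((emb σ).comp (algebraMap k Λ)).toAlgebra' fun c r => by
    ext g
    refine (emb_algebraMap_mul_toFun c r g).trans ?_
    rw [RingHom.comp_apply, emb_eq_single, mul_single_toFun, AlgEquiv.commutes, inv_one, mul_one,
      Algebra.smul_def, Algebra.commutes]

lemma smul_toFun (c : k) (r : SGA σ) (g : G) : (c • r).toFun g = c • r.toFun g :=
  emb_algebraMap_mul_toFun c r g

end SGA

end SkewGroupAlgebra

section OrderAutomorphisms

lemma orderIso_apply_eq_of_le {P : Type*} [Finite P] [PartialOrder P] (φ : P ≃o P) {x : P}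
    (hx : x ≤ φ x) : φ x = x := by
  obtain ⟨n, hn, hper⟩ := φ.injective.mem_periodicPts x
  refine le_antisymm ?_ hx
  calc φ x = φ^[1] x := rfl
    _ ≤ φ^[n] x := φ.monotone.monotone_iterate_of_le_map hx hn
    _ = x := hper

variable {P G : Type*} [Group G]

lemma eq_one_of_le_apply [Finite P] [PartialOrder P] {ρ : G →* (P ≃o P)} {x : P}
    (hx : ∀ g, g ≠ 1 → ρ g x ≠ x) {g : G} (hg : x ≤ ρ g x) : g = 1 :=
  by_contra fun hne => hx g hne (orderIso_apply_eq_of_le (ρ g) hg)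

lemma le_mul_apply [Preorder P] {ρ : G →* (P ≃o P)} {x y z : P} {g h : G} (hxy : x ≤ ρ g y)
    (hyz : y ≤ ρ h z) : x ≤ ρ (g * h) z := by
  rw [map_mul]
  exact hxy.trans ((ρ g).monotone hyz)

end OrderAutomorphisms

section TransporterCategory

variable {k : Type} [CommRing k] {P : Type} [Fintype P] [PartialOrder P] [DecidableEq P]

/-- The relation `x ≤ y` as an element of the incidence algebra, that is, a matrix unit. -/
def incUnit (k : Type) [CommRing k] {P : Type} [Fintype P] [PartialOrder P] [DecidableEq P]
    {x y : P} (hxy : x ≤ y) : IncidenceAlg k P :=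
  ⟨Matrix.single x y 1, fun i j hij => by
    rw [Matrix.single_apply, if_neg]
    rintro ⟨rfl, rfl⟩
    exact hij hxy⟩

lemma coe_incUnit {x y : P} (hxy : x ≤ y) :
    (incUnit k hxy : Matrix P P k) = Matrix.single x y 1 := rfl

lemma incUnit_mul_incUnit {x y z : P} (hxy : x ≤ y) (hyz : y ≤ z) :
    incUnit k hxy * incUnit k hyz = incUnit k (hxy.trans hyz) :=
  Subtype.ext (by simp [coe_incUnit])

lemma incAut_incUnit (φ : P ≃o P) {x y : P} (hxy : x ≤ y) :
    incAut φ (incUnit k hxy) = incUnit k (φ.monotone hxy) := by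
  refine Subtype.ext (Matrix.ext fun i j => ?_)
  change Matrix.single x y (1 : k) (φ.symm i) (φ.symm j) = Matrix.single (φ x) (φ y) (1 : k) i j
  simp only [Matrix.single_apply, OrderIso.eq_symm_apply]

variable {G : Type} [Group G] (ρ : G →* (P ≃o P))

/-- The morphism of the transporter category `G ∝ P` given by `g` and the relation `x ≤ g y`, as the
element `(x ≤ g y) ⊗ g` of the skew group algebra. -/
def transporterArrow (k : Type) [CommRing k] {P : Type} [Fintype P] [PartialOrder P]
    [DecidableEq P] {G : Type} [Group G] (ρ : G →* (P ≃o P)) {x y : P} (g : G)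
    (h : x ≤ ρ g y) : SGA (incRep (k := k) ρ) :=
  SGA.single _ g (incUnit k h)

/-- The identity morphism of the object `x` of the transporter category. -/
def transporterId (k : Type) [CommRing k] {P : Type} [Fintype P] [PartialOrder P]
    [DecidableEq P] {G : Type} [Group G] (ρ : G →* (P ≃o P)) (x : P) :
    SGA (incRep (k := k) ρ) :=
  transporterArrow k ρ (x := x) (y := x) 1 (by simp)

variable [Fintype G] {ρ}

lemma transporterArrow_mul {x y z : P} {g h : G} (hxy : x ≤ ρ g y) (hyz : y ≤ ρ h z) :
    transporterArrow k ρ g hxy * transporterArrow k ρ h hyz =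
      transporterArrow k ρ (g * h) (le_mul_apply hxy hyz) := by
  rw [transporterArrow, transporterArrow, SGA.single_mul_single, transporterArrow]
  congr 1
  calc incUnit k hxy * incAut (ρ g) (incUnit k hyz)
      = incUnit k hxy * incUnit k ((ρ g).monotone hyz) := by rw [incAut_incUnit]
    _ = incUnit k (hxy.trans ((ρ g).monotone hyz)) := incUnit_mul_incUnit _ _
    _ = incUnit k (le_mul_apply hxy hyz) := by simp only [map_mul, RelIso.mul_apply]

lemma transporterId_mul_arrow {x y : P} {g : G} (hxy : x ≤ ρ g y) :
    transporterId k ρ x * transporterArrow k ρ g hxy = transporterArrow k ρ g hxy := by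
  simp only [transporterId, transporterArrow_mul, one_mul]

lemma transporterArrow_mul_id {x y : P} {g : G} (hxy : x ≤ ρ g y) :
    transporterArrow k ρ g hxy * transporterId k ρ y = transporterArrow k ρ g hxy := by
  simp only [transporterId, transporterArrow_mul, mul_one]

lemma transporterId_mul_mul_toFun (x y : P) (r : SGA (incRep (k := k) ρ)) (g : G) :
    ((transporterId k ρ x * r * transporterId k ρ y).toFun g : Matrix P P k) =
      Matrix.single x (ρ g y) ((r.toFun g : Matrix P P k) x (ρ g y)) := by
  have hσ : incRep ρ g (incUnit k (x := y) le_rfl) = incUnit k (x := ρ g y) le_rfl :=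
    incAut_incUnit (ρ g) le_rfl
  simp only [transporterId, transporterArrow, SGA.mul_single_toFun, SGA.single_mul_toFun, map_one]
  simp [hσ, coe_incUnit]

lemma transporterId_mul_mul_eq_zero {x y : P} (hxy : ∀ g, ¬ x ≤ ρ g y)
    (r : SGA (incRep (k := k) ρ)) : transporterId k ρ x * r * transporterId k ρ y = 0 := by
  ext g : 1
  refine Subtype.ext ?_
  rw [transporterId_mul_mul_toFun, (r.toFun g).2 x _ (hxy g), Matrix.single_zero]
  rfl

lemma hasScalarCorner_transporterId {x : P} (hx : ∀ g, g ≠ 1 → ρ g x ≠ x) :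
    HasScalarCorner k (transporterId k ρ x) := by
  intro r
  refine ⟨(r.toFun 1 : Matrix P P k) x x, ?_⟩
  ext g : 1
  refine Subtype.ext ?_
  rw [transporterId_mul_mul_toFun, SGA.smul_toFun, transporterId, transporterArrow,
    SGA.single_toFun]
  by_cases hg : g = 1
  · subst hg
    simp [coe_incUnit]
  · rw [(r.toFun g).2 x _ fun h => hg (eq_one_of_le_apply hx h), if_neg hg]
    simp

lemma linearIndependent_transporterArrow {x y : P} {g h : G} (hgh : g ≠ h) (hg : x ≤ ρ g y)
    (hh : x ≤ ρ h y) :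
    LinearIndependent k ![transporterArrow k ρ g hg, transporterArrow k ρ h hh] := by
  refine LinearIndependent.pair_iff.2 fun s t hst => ?_
  have hcoeff (a : G) := congrArg
    (fun r : SGA (incRep (k := k) ρ) => (r.toFun a : Matrix P P k) x (ρ a y)) hst
  constructor
  · simpa [SGA.smul_toFun, transporterArrow, SGA.single_toFun, coe_incUnit, hgh] using hcoeff g
  · simpa [SGA.smul_toFun, transporterArrow, SGA.single_toFun, coe_incUnit, hgh.symm] using hcoeff h

theorem isKroneckerPair_transporterArrow {x y : P} (hx : ∀ g, g ≠ 1 → ρ g x ≠ x)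
    (hy : ∀ g, g ≠ 1 → ρ g y ≠ y) {g h : G} (hgh : g ≠ h) (hg : x ≤ ρ g y)
    (hh : x ≤ ρ h y) :
    IsKroneckerPair k (transporterId k ρ y) (transporterId k ρ x) (transporterArrow k ρ g hg)
      (transporterArrow k ρ h hh) where
  idempotent := transporterId_mul_arrow _
  source_corner := hasScalarCorner_transporterId hy
  target_corner := hasScalarCorner_transporterId hx
  source_mul_target := transporterId_mul_mul_eq_zero fun _ ha => hgh <| mul_left_cancel <|
    (eq_one_of_le_apply hy (le_mul_apply ha hg)).trans
      (eq_one_of_le_apply hy (le_mul_apply ha hh)).symm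
  target_mul_fst := transporterId_mul_arrow hg
  target_mul_snd := transporterId_mul_arrow hh
  fst_mul_source := transporterArrow_mul_id hg
  snd_mul_source := transporterArrow_mul_id hh
  linearIndependent := linearIndependent_transporterArrow hgh hg hh

end TransporterCategory

theorem transporter_category_fork_infinite_rep_type_general {k : Type} [CommRing k] [Infinite k]
    (hk : IsConnectedRing k) {P : Type} [Fintype P] [PartialOrder P] [DecidableEq P] {G : Type}
    [Group G] [Fintype G] (ρ : G →* (P ≃o P)) {x y z : P} (hx : ∀ g, g ≠ 1 → ρ g x ≠ x)
    (hz : ∀ g, g ≠ 1 → ρ g z ≠ z) (hyz : y ≠ z) (horb : ∃ g : G, ρ g z = y)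
    (hrel : (x ≤ y ∧ x ≤ z) ∨ (y ≤ x ∧ z ≤ x)) :
    ¬ FiniteRepType (SGA (incRep (k := k) ρ)) := by
  obtain ⟨g, rfl⟩ := horb
  have hg : 1 ≠ g := by
    rintro rfl
    exact hyz (by rw [map_one, RelIso.one_apply])
  rcases hrel with ⟨hxy, hxz⟩ | ⟨hyx, hzx⟩
  · have hxz' : x ≤ ρ 1 z := by rwa [map_one]
    exact (isKroneckerPair_transporterArrow hx hz hg hxz' hxy).not_finiteRepType hk
  · have hzx' : z ≤ ρ 1 x := by rwa [map_one]
    have hyx' : z ≤ ρ g⁻¹ x := by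
      rwa [map_inv, ← OrderIso.le_iff_le (ρ g), RelIso.apply_inv_self]
    exact (isKroneckerPair_transporterArrow hz hx (inv_ne_one.2 hg.symm).symm hzx'
      hyx').not_finiteRepType hk

/-- Let `G` be a finite group acting freely on a connected finite poset `𝒫`.
If there exist distinct elements `x, y, z` with `y, z` in the same `G`-orbit such that either
`x < y` and `x < z`, or `x > y` and `x > z`, then the transporter category `𝒯 = G ∝ 𝒫` is of
infinite representation type. -/
theorem transporter_category_fork_infinite_rep_type
    (k : Type) [Field k] [IsAlgClosed k] (p : ℕ) [CharP k p]
    (P : Type) [Fintype P] [PartialOrder P] [DecidableEq P]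
    (hconn : PosetConnected P)
    (G : Type) [Group G] [Fintype G] (ρ : G →* (P ≃o P))
    (hfree : ∀ g : G, g ≠ 1 → ∀ x : P, ρ g x ≠ x)
    (x y z : P) (hxy : x ≠ y) (hxz : x ≠ z) (hyz : y ≠ z)
    (horb : ∃ g : G, ρ g z = y)
    (hrel : (x < y ∧ x < z) ∨ (y < x ∧ z < x)) :
    ¬ FiniteRepType (SGA (incRep (k := k) ρ)) :=
  transporter_category_fork_infinite_rep_type_general (isConnectedRing_of_isDomain k) ρ
    (hfree · · x) (hfree · · z) hyz horb
    (hrel.imp (.imp le_of_lt le_of_lt) (.imp le_of_lt le_of_lt))
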